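/- arXiv:0910.0700 — 4 statements merged into one kernel-verified Lean document; each statement's English description precedes it below -/
import Mathlib

section
/- Let A be an associative algebra over a field K of characteristic zero satisfying the identity abc = −bac for all a,b,c ∈ A. Then every product of four elements of A vanishes: abcd = 0 for all a,b,c,d ∈ A. -/
/-!
In a product of four elements, the identity flips the sign under swapping the first two factors, and,
after left multiplication, under swapping the second and third. The 3-cycle `cabd ↦ abcd` is a
composite of two such swaps, so `cabd = abcd`; but the identity applied to the elements `ab`, `c`, `d`
gives `abcd = -cabd`. Hence `2 • abcd = 0`, and `2` is invertible in `K`.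
-/

/-- In an associative algebra over a field of characteristic zero
satisfying `abc = -bac`, every product of four elements vanishes. -/
theorem prod_four_eq_zero_of_abc_eq_neg_bac
    {K A : Type*} [Field K] [CharZero K] [NonUnitalRing A]
    [Module K A] [SMulCommClass K A A] [IsScalarTower K A A]
    (h : ∀ a b c : A, a * b * c = -(b * a * c)) :
    ∀ a b c d : A, a * b * c * d = 0 := by
  intro a b c d
  have cyc : c * (a * b) * d = a * b * c * d := by
    calc c * (a * b) * d = c * a * b * d := by rw [mul_assoc c a b]
      _ = -(a * (c * b * d)) := by rw [h c a b, neg_mul]; simp only [mul_assoc]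
      _ = a * b * c * d := by rw [h c b d, mul_neg, neg_neg]; simp only [mul_assoc]
  have hneg : a * b * c * d = -(a * b * c * d) := by
    conv_lhs => rw [h (a * b) c d, cyc]
  have h2 : (2 : K) • (a * b * c * d) = 0 := by
    rw [two_smul]
    exact eq_neg_iff_add_eq_zero.mp hneg
  exact (smul_eq_zero.mp h2).resolve_left two_ne_zero
end

section
/- Let K be a field of characteristic zero and A₂ the 2-dimensional (non-unital) associative K-algebra with basis {e₁, e₂} and multiplication e₁e₁ = e₂, e₁e₂ = e₂e₁ = e₂e₂ = 0. Consider the Hochschild chain complex Cₙ = A₂ ⊗ A₂^{⊗n} with differential dₙ(a₀,a₁,…,aₙ) = (a₀a₁,a₂,…,aₙ) + Σ_{i=1}^{n−1} (−1)ⁱ (a₀,…,aᵢaᵢ₊₁,…,aₙ) + (−1)ⁿ (aₙa₀,a₁,…,a_{n−1}). Then d₁ = 0 on C₁ (so dim ker d₁ = 4), the image of d₂ : C₂ → C₁ has dimension 2, and the first Hochschild homology H₁(A₂,A₂) = ker d₁ / im d₂ is 2-dimensional, hence isomorphic as a K-vector space to A₂. -/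
/-!
In the basis `e_i ⊗ e_j` the differential `d₂` sends `f` to the element with coordinates
`(0, -f₀₀₀, 2 f₀₀₀, f₀₀₁ + f₀₁₀ - f₁₀₀)` at `e₁⊗e₁, e₁⊗e₂, e₂⊗e₁, e₂⊗e₂`; so its image is spanned
by `2 e₂⊗e₁ - e₁⊗e₂` and `e₂⊗e₂`. Equivalently, the image is the kernel of the surjection
`homologyClass : C₁ → K²`, `x ↦ (x₀₀, x₁₀ + 2 x₀₁)` (`range_d2`). As `A₂` is commutative, `d₁ = 0`
and `ker d₁` is all of `C₁`, so rank–nullity gives `dim im d₂ = 4 - 2`, and the first isomorphism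
theorem identifies `H₁` with `K²`.
-/

noncomputable section

variable (K : Type*) [Field K]

/-- Structure constants of the 2-dimensional associative algebra `A₂` with basis
`{e₁, e₂}` (indexed by `0, 1`) and multiplication `e₁e₁ = e₂`, all other products of
basis vectors being `0`: `hmul i j k` is the coefficient of `e_k` in `e_i · e_j`. -/
def hmul : Fin 2 → Fin 2 → Fin 2 → K := fun i j k =>
  if i = 0 ∧ j = 0 ∧ k = 1 then 1 else 0

/-- Kronecker delta. -/
def kd : Fin 2 → Fin 2 → K := fun i j => if i = j then 1 else 0

/-- The Hochschild differential `d₁ : C₁ = A₂ ⊗ A₂ → C₀ = A₂`,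
`d₁(a₀,a₁) = a₀a₁ - a₁a₀`, expressed in the basis `e_i ⊗ e_j` of `C₁`
(so `C₁ ≅ (Fin 2 × Fin 2) → K` and `C₀ ≅ Fin 2 → K`). -/
def d1 : ((Fin 2 × Fin 2) → K) →ₗ[K] (Fin 2 → K) :=
  Matrix.toLin' (fun k i => hmul K i.1 i.2 k - hmul K i.2 i.1 k)

/-- The Hochschild differential `d₂ : C₂ = A₂ ⊗ A₂ ⊗ A₂ → C₁`,
`d₂(a₀,a₁,a₂) = (a₀a₁,a₂) - (a₀,a₁a₂) + (a₂a₀,a₁)`, in the bases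
`e_{i₀} ⊗ e_{i₁} ⊗ e_{i₂}` of `C₂` and `e_{k₀} ⊗ e_{k₁}` of `C₁`. -/
def d2 : ((Fin 2 × Fin 2 × Fin 2) → K) →ₗ[K] ((Fin 2 × Fin 2) → K) :=
  Matrix.toLin' (fun k i =>
    hmul K i.1 i.2.1 k.1 * kd K i.2.2 k.2
      - kd K i.1 k.1 * hmul K i.2.1 i.2.2 k.2
      + hmul K i.2.2 i.1 k.1 * kd K i.2.1 k.2)

theorem d1_eq_zero : d1 K = 0 := by
  have key (f : Fin 2 × Fin 2 → K) (k : Fin 2) :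
      d1 K f k = ∑ i : Fin 2 × Fin 2, (hmul K i.1 i.2 k - hmul K i.2 i.1 k) * f i := rfl
  refine LinearMap.ext fun f => funext fun k => ?_
  rw [key]
  simp [Fintype.sum_prod_type, hmul]

theorem d2_apply (f : Fin 2 × Fin 2 × Fin 2 → K) :
    d2 K f (0, 0) = 0 ∧ d2 K f (0, 1) = -f (0, 0, 0) ∧ d2 K f (1, 0) = 2 * f (0, 0, 0) ∧
      d2 K f (1, 1) = f (0, 0, 1) + f (0, 1, 0) - f (1, 0, 0) := by
  have key (k : Fin 2 × Fin 2) : d2 K f k = ∑ i : Fin 2 × Fin 2 × Fin 2,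
      (hmul K i.1 i.2.1 k.1 * kd K i.2.2 k.2 - kd K i.1 k.1 * hmul K i.2.1 i.2.2 k.2
        + hmul K i.2.2 i.1 k.1 * kd K i.2.1 k.2) * f i := rfl
  simp only [key]
  refine ⟨?_, ?_, ?_, ?_⟩ <;> simp [Fintype.sum_prod_type, hmul, kd, -mul_eq_mul_right_iff] <;> ring

/-- The map `C₁ → K²`, `x ↦ (x₀₀, x₁₀ + 2 x₀₁)`, whose kernel is the image of `d₂`; it gives the
coordinates of the homology class of a 1-chain. -/
def homologyClass : (Fin 2 × Fin 2 → K) →ₗ[K] (Fin 2 → K) :=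
  LinearMap.pi ![LinearMap.proj (0, 0),
    LinearMap.proj (1, 0) + (2 : K) • LinearMap.proj (0, 1)]

theorem homologyClass_apply (x : Fin 2 × Fin 2 → K) :
    homologyClass K x = ![x (0, 0), x (1, 0) + 2 * x (0, 1)] := by
  ext i
  fin_cases i <;> simp [homologyClass]

theorem homologyClass_surjective : Function.Surjective (homologyClass K) := by
  intro y
  refine ⟨fun p => if p = (0, 0) then y 0 else if p = (1, 0) then y 1 else 0, ?_⟩
  rw [homologyClass_apply]
  ext i
  fin_cases i <;> simp

theorem range_d2 : LinearMap.range (d2 K) = LinearMap.ker (homologyClass K) := by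
  ext x
  rw [LinearMap.mem_ker, homologyClass_apply]
  constructor
  · rintro ⟨f, rfl⟩
    obtain ⟨h00, h01, h10, -⟩ := d2_apply K f
    rw [h00, h01, h10]
    ext i
    fin_cases i <;> simp
  · intro h
    have h0 : x (0, 0) = 0 := by simpa using congrFun h 0
    have h1 : x (1, 0) + 2 * x (0, 1) = 0 := by simpa using congrFun h 1
    -- The chain `-x₀₁ e₁⊗e₁⊗e₁ + x₁₁ e₁⊗e₁⊗e₂` bounds `x`.
    refine ⟨fun p => if p = (0, 0, 0) then -x (0, 1) else if p = (0, 0, 1) then x (1, 1) else 0, ?_⟩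
    obtain ⟨h00', h01', h10', h11'⟩ := d2_apply K
      (fun p => if p = (0, 0, 0) then -x (0, 1) else if p = (0, 0, 1) then x (1, 1) else 0)
    ext ⟨i, j⟩
    fin_cases i <;> fin_cases j
    · exact h00'.trans h0.symm
    · exact h01'.trans (by simp)
    · exact h10'.trans (by simp; linear_combination -h1)
    · exact h11'.trans (by simp)

theorem finrank_range_d2 : Module.finrank K (LinearMap.range (d2 K)) = 2 := by
  have h := LinearMap.finrank_range_add_finrank_ker (homologyClass K)
  rw [LinearMap.range_eq_top.mpr (homologyClass_surjective K), finrank_top, ← range_d2] at h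
  simp at h
  omega

/-- The first isomorphism theorem for `homologyClass` restricted to `ker d₁`, which is all of
`C₁`. -/
theorem nonempty_homology_equiv : Nonempty
    ((LinearMap.ker (d1 K) ⧸
      (LinearMap.range (d2 K)).comap (LinearMap.ker (d1 K)).subtype) ≃ₗ[K] (Fin 2 → K)) := by
  have hs : Function.Surjective (homologyClass K ∘ₗ (LinearMap.ker (d1 K)).subtype) := by
    intro y
    obtain ⟨x, rfl⟩ := homologyClass_surjective K y
    exact ⟨⟨x, by simp [d1_eq_zero]⟩, rfl⟩
  have hk : (LinearMap.range (d2 K)).comap (LinearMap.ker (d1 K)).subtype =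
      LinearMap.ker (homologyClass K ∘ₗ (LinearMap.ker (d1 K)).subtype) := by
    rw [range_d2, LinearMap.ker_comp]
  exact ⟨(Submodule.quotEquivOfEq _ _ hk).trans (LinearMap.quotKerEquivOfSurjective _ hs)⟩

/-- For the 2-dimensional algebra `A₂` (with `e₁e₁ = e₂` and all other
basis products zero), the first Hochschild differential `d₁` vanishes (so
`dim ker d₁ = 4`), `dim im d₂ = 2`, and the first Hochschild homology
`H₁(A₂,A₂) = ker d₁ / im d₂` is 2-dimensional, hence isomorphic to `A₂` as a
`K`-vector space. -/
theorem hochschild_H1_of_A2 [CharZero K] :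
    d1 K = 0 ∧
    Module.finrank K (LinearMap.ker (d1 K)) = 4 ∧
    Module.finrank K (LinearMap.range (d2 K)) = 2 ∧
    Module.finrank K
      (LinearMap.ker (d1 K) ⧸
        (LinearMap.range (d2 K)).comap (LinearMap.ker (d1 K)).subtype) = 2 ∧
    Nonempty
      ((LinearMap.ker (d1 K) ⧸
        (LinearMap.range (d2 K)).comap (LinearMap.ker (d1 K)).subtype) ≃ₗ[K]
        (Fin 2 → K)) := by
  obtain ⟨e⟩ := nonempty_homology_equiv K
  refine ⟨d1_eq_zero K, ?_, finrank_range_d2 K, ?_, ⟨e⟩⟩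
  · rw [d1_eq_zero, LinearMap.ker_zero, finrank_top]
    simp
  · rw [e.finrank_eq]
    simp

end
end

section
/- Let A be an associative algebra over a field K of characteristic zero satisfying the identity abc = −cba for all a,b,c ∈ A. Then for every permutation σ ∈ Σ₄ and all x₁,x₂,x₃,x₄ ∈ A one has x_{σ(1)} x_{σ(2)} x_{σ(3)} x_{σ(4)} = sign(σ) · x₁x₂x₃x₄. -/
/-!
Multiplying `abc = -cba` by a fourth factor on either side, or applying it with the middle factor
a product of two, shows that exchanging the factors in positions 1 and 3, 2 and 4, or 1 and 4 of a
product of four changes its sign. Conjugating these transpositions by one another gives the same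
for the three adjacent transpositions. The permutations `σ` for which the theorem holds for every
`x` are closed under composition, and the adjacent transpositions generate the symmetric group as
a monoid.
-/

section FourFold

variable {A : Type*} [NonUnitalRing A]

theorem mul_four_swap_first_third (h : ∀ a b c : A, a * b * c = -(c * b * a)) (a b c d : A) :
    a * b * c * d = -(c * b * a * d) := by
  rw [h a b c, neg_mul]

theorem mul_four_swap_second_fourth (h : ∀ a b c : A, a * b * c = -(c * b * a)) (a b c d : A) :
    a * b * c * d = -(a * d * c * b) := by
  have := congrArg (a * ·) (h b c d)
  simpa only [mul_neg, mul_assoc] using this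

theorem mul_four_swap_first_fourth (h : ∀ a b c : A, a * b * c = -(c * b * a)) (a b c d : A) :
    a * b * c * d = -(d * b * c * a) := by
  simpa only [mul_assoc] using h a (b * c) d

/-- The transposition `(1 2)` is `(2 4)` conjugated by `(1 4)`. -/
theorem mul_four_swap_first_second (h : ∀ a b c : A, a * b * c = -(c * b * a)) (a b c d : A) :
    a * b * c * d = -(b * a * c * d) := by
  rw [mul_four_swap_first_fourth h a b c d, mul_four_swap_second_fourth h d b c a,
    mul_four_swap_first_fourth h d a c b, neg_neg]

/-- The transposition `(2 3)` is `(1 2)` conjugated by `(1 3)`. -/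
theorem mul_four_swap_second_third (h : ∀ a b c : A, a * b * c = -(c * b * a)) (a b c d : A) :
    a * b * c * d = -(a * c * b * d) := by
  rw [mul_four_swap_first_third h a b c d, mul_four_swap_first_second h c b a d,
    mul_four_swap_first_third h b c a d, neg_neg]

/-- The transposition `(3 4)` is `(1 4)` conjugated by `(1 3)`. -/
theorem mul_four_swap_third_fourth (h : ∀ a b c : A, a * b * c = -(c * b * a)) (a b c d : A) :
    a * b * c * d = -(a * b * d * c) := by
  rw [mul_four_swap_first_third h a b c d, mul_four_swap_first_fourth h c b a d,
    mul_four_swap_first_third h d b a c, neg_neg]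

end FourFold

/-- In an associative algebra over a field of characteristic zero
satisfying `abc = -cba`, for every permutation `σ ∈ Σ₄` one has
`x_{σ(1)}x_{σ(2)}x_{σ(3)}x_{σ(4)} = sign(σ) · x₁x₂x₃x₄`. -/
theorem perm_prod_four_eq_sign_smul
    {K A : Type*} [Field K] [CharZero K] [NonUnitalRing A]
    [Module K A] [SMulCommClass K A A] [IsScalarTower K A A]
    (h : ∀ a b c : A, a * b * c = -(c * b * a)) :
    ∀ (σ : Equiv.Perm (Fin 4)) (x : Fin 4 → A),
      x (σ 0) * x (σ 1) * x (σ 2) * x (σ 3) =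
        ((Equiv.Perm.sign σ : ℤ) • (x 0 * x 1 * x 2 * x 3)) := by
  intro σ
  have hσ : σ ∈ Submonoid.closure
      (Set.range fun i : Fin 3 => Equiv.swap i.castSucc i.succ) := by
    rw [Equiv.Perm.mclosure_swap_castSucc_succ]
    exact Submonoid.mem_top σ
  induction hσ using Submonoid.closure_induction with
  | mem τ hτ =>
    obtain ⟨i, rfl⟩ := hτ
    intro x
    have hsign : Equiv.Perm.sign (Equiv.swap i.castSucc i.succ) = -1 :=
      Equiv.Perm.sign_swap (Fin.castSucc_lt_succ).ne
    simp only [hsign, Units.val_neg, Units.val_one, neg_smul, one_smul]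
    fin_cases i
    · exact mul_four_swap_first_second h (x 1) (x 0) (x 2) (x 3)
    · exact mul_four_swap_second_third h (x 0) (x 2) (x 1) (x 3)
    · exact mul_four_swap_third_fourth h (x 0) (x 1) (x 3) (x 2)
  | one => intro x; simp
  | mul σ τ _ _ ihσ ihτ =>
    intro x
    -- `τ` permutes the positions of the family `x ∘ σ`.
    have hτ := ihτ (x ∘ σ)
    simp only [Function.comp_apply] at hτ
    simp only [Equiv.Perm.mul_apply, hτ, ihσ x, smul_smul, Equiv.Perm.sign_mul, Units.val_mul,
      mul_comm]
end

section
/- Let A be an associative algebra over a field K of characteristic zero satisfying the identity abc = −cba for all a,b,c ∈ A. Then every product of five elements vanishes: x₁x₂x₃x₄x₅ = 0 for all x₁,…,x₅ ∈ A. -/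
/-!
The word `abcde` can be rearranged into `decab` in two ways. Exchanging the blocks `ab` and `de`
around `c` is one application of the identity, so `abcde = -decab`. On the other hand, exchanging
`a` with `d` around `bc`, and then `b` with `e` around `ca`, uses the identity twice, so
`abcde = decab`. Hence `2 • abcde = 0`, and `2` is invertible in `K`.
-/

/-- In an associative algebra over a field of characteristic zero
satisfying `abc = -cba`, every product of five elements vanishes. -/
theorem prod_five_eq_zero_of_abc_eq_neg_cba
    {K A : Type*} [Field K] [CharZero K] [NonUnitalRing A]
    [Module K A] [SMulCommClass K A A] [IsScalarTower K A A]
    (h : ∀ a b c : A, a * b * c = -(c * b * a)) :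
    ∀ x₁ x₂ x₃ x₄ x₅ : A, x₁ * x₂ * x₃ * x₄ * x₅ = 0 := by
  intro a b c d e
  have hodd : a * b * c * d * e = -(d * e * c * a * b) := by
    simpa only [mul_assoc] using h (a * b) c (d * e)
  have heven : a * b * c * d * e = d * e * c * a * b := by
    calc a * b * c * d * e = a * (b * c) * d * e := by simp only [mul_assoc]
      _ = -(d * (b * (c * a) * e)) := by rw [h a (b * c) d]; simp only [mul_assoc, neg_mul]
      _ = d * e * c * a * b := by rw [h b (c * a) e]; simp only [mul_assoc, mul_neg, neg_neg]
  have htwo : (2 : K) • (a * b * c * d * e) = 0 := by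
    rw [two_smul]
    nth_rewrite 1 [hodd]
    rw [heven, neg_add_cancel]
  exact (smul_eq_zero.mp htwo).resolve_left two_ne_zero
end
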